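/- Let 1 ≤ k ≤ n−1. Then for all α ∈ B_k and β ∈ B_{n−k}, in the braid group B_n one has δ^k · ι_low^{(k)}(α) · ι_high^{(k)}(β) = ι_low^{(n−k)}(β) · ι_high^{(n−k)}(α) · δ^k, where for 1 ≤ m ≤ n−1, ι_low^{(m)} : B_m → B_n denotes the group homomorphism determined on generators by σ_i ↦ σ_i (1 ≤ i ≤ m−1), and ι_high^{(m)} : B_{n−m} → B_n denotes the group homomorphism determined on generators by σ_j ↦ σ_{m+j} (1 ≤ j ≤ n−m−1). -/

import Mathlib

/-- The braid relations on `m` generators (so that `σ_1, …, σ_m` present the braid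
group `B_{m+1}`); generator `i : Fin m` corresponds to `σ_{i+1}`. -/
def braidRels (m : ℕ) : Set (FreeGroup (Fin m)) :=
  {r | ∃ i j : Fin m, (i.val + 2 ≤ j.val ∨ j.val + 2 ≤ i.val) ∧
        r = FreeGroup.of i * FreeGroup.of j * (FreeGroup.of i)⁻¹ * (FreeGroup.of j)⁻¹}
  ∪ {r | ∃ i j : Fin m, (i.val + 1 = j.val ∨ j.val + 1 = i.val) ∧
        r = FreeGroup.of i * FreeGroup.of j * FreeGroup.of i *
            (FreeGroup.of j * FreeGroup.of i * FreeGroup.of j)⁻¹}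

/-- The braid group `B n` on `n` strands, presented with generators `σ_1, …, σ_{n-1}`. -/
abbrev BraidGroup (n : ℕ) : Type := PresentedGroup (braidRels (n - 1))

namespace BraidGroup

/-- The Artin generator `σ_i` of `B n` for `1 ≤ i ≤ n - 1` (junk value `1` otherwise). -/
def σ (n i : ℕ) : BraidGroup n :=
  if h : 1 ≤ i ∧ i ≤ n - 1 then PresentedGroup.of (⟨i - 1, by omega⟩ : Fin (n - 1)) else 1

/-- `D n k = σ_{k-1} ⋯ σ_2 σ_1` in `B n`; `D n 1 = 1`. -/
def D (n k : ℕ) : BraidGroup n :=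
  (((List.range (k - 1)).reverse).map (fun j => σ n (j + 1))).prod

/-- `E n k = σ_1 σ_2 ⋯ σ_{k-1}` in `B n`; `E n 1 = 1`. -/
def E (n k : ℕ) : BraidGroup n :=
  ((List.range (k - 1)).map (fun j => σ n (j + 1))).prod

/-- `U n k = D n k * E n k` in `B n`; `U n 1 = 1`. -/
def U (n k : ℕ) : BraidGroup n := D n k * E n k

/-- `δ = σ_{n-1} σ_{n-2} ⋯ σ_1` in `B n`. -/
def delta (n : ℕ) : BraidGroup n := D n n

/-- `Δ = σ_1 (σ_2 σ_1) ⋯ (σ_{n-1} ⋯ σ_1) = D_2 D_3 ⋯ D_n` in `B n`. -/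
def Delta (n : ℕ) : BraidGroup n :=
  ((List.range (n - 1)).map (fun j => D n (j + 2))).prod

end BraidGroup

namespace BraidGroup

theorem σ_eq_of (n : ℕ) (i : Fin (n - 1)) : PresentedGroup.of i = σ n (i.val + 1) := by
  have h : 1 ≤ i.val + 1 ∧ i.val + 1 ≤ n - 1 := by omega
  simp [σ, h]

theorem σ_comm {n i j : ℕ} (hi : 1 ≤ i) (hij : i + 2 ≤ j) (hj : j ≤ n - 1) :
    σ n i * σ n j = σ n j * σ n i := by
  obtain ⟨a, rfl⟩ : ∃ a, i = a + 1 := ⟨i - 1, by omega⟩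
  obtain ⟨b, rfl⟩ : ∃ b, j = b + 1 := ⟨j - 1, by omega⟩
  have h := PresentedGroup.one_of_mem (rels := braidRels (n - 1))
    (Or.inl ⟨⟨a, by omega⟩, ⟨b, by omega⟩, Or.inl (by simp only; omega), rfl⟩)
  simp only [map_mul, map_inv] at h
  rw [mul_inv_eq_one, mul_inv_eq_iff_eq_mul] at h
  have ha := σ_eq_of n ⟨a, by omega⟩
  have hb := σ_eq_of n ⟨b, by omega⟩
  rw [← ha, ← hb]
  exact h

theorem σ_braid {n i : ℕ} (hi : 1 ≤ i) (hin : i + 1 ≤ n - 1) :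
    σ n (i + 1) * σ n i * σ n (i + 1) = σ n i * σ n (i + 1) * σ n i := by
  obtain ⟨a, rfl⟩ : ∃ a, i = a + 1 := ⟨i - 1, by omega⟩
  have h := PresentedGroup.one_of_mem (rels := braidRels (n - 1))
    (Or.inr ⟨⟨a + 1, by omega⟩, ⟨a, by omega⟩, Or.inr rfl, rfl⟩)
  simp only [map_mul, map_inv] at h
  rw [mul_inv_eq_one] at h
  have ha := σ_eq_of n ⟨a, by omega⟩
  have hb := σ_eq_of n ⟨a + 1, by omega⟩
  rw [← ha, ← hb]
  exact h

theorem D_one (n : ℕ) : D n 1 = 1 := by simp [D]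

theorem D_succ (n : ℕ) {m : ℕ} (hm : 1 ≤ m) : D n (m + 1) = σ n m * D n m := by
  obtain ⟨a, rfl⟩ : ∃ a, m = a + 1 := ⟨m - 1, by omega⟩
  simp [D, List.range_succ]

theorem D_comm_σ {n m i : ℕ} (hm : 1 ≤ m) (hmi : m + 1 ≤ i) (hi : i ≤ n - 1) :
    Commute (D n m) (σ n i) := by
  induction m, hm using Nat.le_induction with
  | base => rw [D_one]; exact Commute.one_left _
  | succ m hm ih =>
    rw [D_succ n hm]
    exact Commute.mul_left (σ_comm hm (by omega) hi) (ih (by omega))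

theorem D_mul_σ_succ {n m i : ℕ} (hi : 1 ≤ i) (him : i + 2 ≤ m) (hmn : m ≤ n) :
    SemiconjBy (D n m) (σ n (i + 1)) (σ n i) := by
  induction m, him using Nat.le_induction with
  | base =>
    have hc := (D_comm_σ hi le_rfl (by omega : i + 1 ≤ n - 1)).eq
    rw [SemiconjBy, D_succ n (by omega), D_succ n hi]
    calc σ n (i + 1) * (σ n i * D n i) * σ n (i + 1)
        = σ n (i + 1) * σ n i * (D n i * σ n (i + 1)) := by group
      _ = σ n (i + 1) * σ n i * σ n (i + 1) * D n i := by rw [hc]; group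
      _ = σ n i * (σ n (i + 1) * (σ n i * D n i)) := by
        rw [σ_braid hi (by omega)]; group
  | succ m him ih =>
    rw [D_succ n (by omega)]
    exact SemiconjBy.mul_left (σ_comm hi him (by omega)).symm (ih (by omega))

theorem delta_mul_σ_succ {n i : ℕ} (hi : 1 ≤ i) (hin : i + 1 ≤ n - 1) :
    SemiconjBy (delta n) (σ n (i + 1)) (σ n i) :=
  D_mul_σ_succ hi (by omega) le_rfl

theorem delta_mul_D_succ {n j : ℕ} (hj : 1 ≤ j) (hjn : j + 1 ≤ n) :
    delta n * D n (j + 1) = D n j * delta n * σ n 1 := by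
  induction j, hj using Nat.le_induction with
  | base => simp [D_succ n le_rfl, D_one]
  | succ j hj ih =>
    rw [D_succ n (by omega : 1 ≤ j + 1), ← mul_assoc,
      (delta_mul_σ_succ hj (by omega)).eq, mul_assoc, ih (by omega), D_succ n hj]
    simp only [mul_assoc]

theorem delta_sq_mul_σ_one {n : ℕ} (hn : 2 ≤ n) :
    SemiconjBy (delta n ^ 2) (σ n 1) (σ n (n - 1)) := by
  obtain ⟨m, rfl⟩ : ∃ m, n = m + 1 := ⟨n - 1, by omega⟩
  have hsq := delta_mul_D_succ (n := m + 1) (j := m) (by omega) le_rfl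
  have hd : delta (m + 1) = σ (m + 1) m * D (m + 1) m := D_succ (m + 1) (by omega)
  change _ * _ = σ (m + 1) m * _
  rw [sq]
  calc delta (m + 1) * delta (m + 1) * σ (m + 1) 1
      = σ (m + 1) m * (D (m + 1) m * delta (m + 1) * σ (m + 1) 1) := by
        conv_lhs => rw [mul_assoc]; enter [1]; rw [hd]
        simp only [mul_assoc]
    _ = σ (m + 1) m * (delta (m + 1) * delta (m + 1)) := by rw [← hsq]; rfl

theorem delta_pow_mul_σ_add {n k i : ℕ} (hi : 1 ≤ i) (hin : k + i ≤ n - 1) :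
    SemiconjBy (delta n ^ k) (σ n (k + i)) (σ n i) := by
  induction k with
  | zero => simp
  | succ k ih =>
    rw [pow_succ, show k + 1 + i = k + i + 1 by omega]
    exact (ih (by omega)).mul_left (delta_mul_σ_succ (by omega) (by omega))

theorem delta_pow_mul_σ_of_lt {n k i : ℕ} (hi : 1 ≤ i) (hik : i ≤ k - 1) (hkn : k ≤ n - 1) :
    SemiconjBy (delta n ^ k) (σ n i) (σ n (n - k + i)) := by
  have h₁ := delta_pow_mul_σ_add (n := n) (k := i - 1) (i := 1) le_rfl (by omega)
  have h₂ := delta_pow_mul_σ_add (n := n) (k := k - i - 1) (i := n - k + i)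
    (by omega) (by omega)
  rw [show i - 1 + 1 = i by omega] at h₁
  rw [show k - i - 1 + (n - k + i) = n - 1 by omega] at h₂
  have h := (h₂.mul_left (delta_sq_mul_σ_one (by omega))).mul_left h₁
  rwa [← pow_add, ← pow_add, show k - i - 1 + 2 + (i - 1) = k by omega] at h

/-- Two homomorphisms out of a braid group are conjugate by `d` as soon as they are on the
Artin generators. -/
theorem semiconjBy_of_σ {m : ℕ} {G : Type*} [Group G] {d : G} {f g : BraidGroup m →* G}
    (h : ∀ i, 1 ≤ i → i ≤ m - 1 → SemiconjBy d (f (σ m i)) (g (σ m i)))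
    (x : BraidGroup m) : SemiconjBy d (f x) (g x) := by
  have hfg : (MulAut.conj d).toMonoidHom.comp f = g := by
    refine PresentedGroup.ext fun i => ?_
    rw [σ_eq_of]
    exact mul_inv_eq_iff_eq_mul.2 (h _ (by omega) (by omega)).eq
  rw [← hfg]
  exact mul_inv_eq_iff_eq_mul.1 rfl

end BraidGroup

/-- **Lemma (shift past δ^k).** Let `1 ≤ k ≤ n - 1`. If `f = ι_low^{(k)} : B_k → B_n`,
`g = ι_high^{(k)} : B_{n-k} → B_n`, `f' = ι_low^{(n-k)} : B_{n-k} → B_n` and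
`g' = ι_high^{(n-k)} : B_k → B_n` are the homomorphisms determined on generators by
`σ_i ↦ σ_i`, `σ_j ↦ σ_{k+j}`, `σ_i ↦ σ_i`, `σ_j ↦ σ_{(n-k)+j}` respectively, then for
all `α ∈ B_k`, `β ∈ B_{n-k}` one has `δ^k · f α · g β = f' β · g' α · δ^k` in `B n`. -/
theorem delta_pow_splice (n k : ℕ) (hk1 : 1 ≤ k) (hkn : k ≤ n - 1)
    (f : BraidGroup k →* BraidGroup n)
    (g : BraidGroup (n - k) →* BraidGroup n)
    (f' : BraidGroup (n - k) →* BraidGroup n)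
    (g' : BraidGroup k →* BraidGroup n)
    (hf : ∀ i, 1 ≤ i → i ≤ k - 1 → f (BraidGroup.σ k i) = BraidGroup.σ n i)
    (hg : ∀ j, 1 ≤ j → j ≤ n - k - 1 →
      g (BraidGroup.σ (n - k) j) = BraidGroup.σ n (k + j))
    (hf' : ∀ i, 1 ≤ i → i ≤ n - k - 1 →
      f' (BraidGroup.σ (n - k) i) = BraidGroup.σ n i)
    (hg' : ∀ j, 1 ≤ j → j ≤ k - 1 →
      g' (BraidGroup.σ k j) = BraidGroup.σ n ((n - k) + j)) :
    ∀ (α : BraidGroup k) (β : BraidGroup (n - k)),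
      BraidGroup.delta n ^ k * f α * g β = f' β * g' α * BraidGroup.delta n ^ k := by
  intro α β
  have hα : SemiconjBy (BraidGroup.delta n ^ k) (f α) (g' α) :=
    BraidGroup.semiconjBy_of_σ (fun i hi hik => by
      rw [hf i hi hik, hg' i hi hik]
      exact BraidGroup.delta_pow_mul_σ_of_lt hi hik hkn) α
  have hβ : SemiconjBy (BraidGroup.delta n ^ k) (g β) (f' β) :=
    BraidGroup.semiconjBy_of_σ (fun i hi hik => by
      rw [hg i hi hik, hf' i hi hik]
      exact BraidGroup.delta_pow_mul_σ_add hi (by omega)) β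
  have hcomm : Commute (f α) (g β) :=
    (BraidGroup.semiconjBy_of_σ (f := f) (g := f) (fun i hi hik =>
      Commute.symm (BraidGroup.semiconjBy_of_σ (f := g) (g := g) (fun j hj hjk => by
        rw [hf i hi hik, hg j hj hjk]
        exact BraidGroup.σ_comm hi (by omega) (by omega)) β)) α : Commute (g β) (f α)).symm
  rw [mul_assoc, hcomm.eq]
  exact (hβ.mul_right hα).eq
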